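/- arXiv:2211.12316 — 2 statements merged into one kernel-verified Lean document; each statement's English description precedes it below -/
import Mathlib

section
/- Let k ≥ 0 and let f, g : {0,1}^n → {±1} be Boolean functions with maximum sensitivity ms(f) ≤ k and ms(g) ≤ k. If f and g agree on some Hamming ball of radius 2k in {0,1}^n (i.e., there exists z ∈ {0,1}^n with f(x) = g(x) for all x with d_H(x,z) ≤ 2k), then f = g on all of {0,1}^n. In other words, any function with maximum sensitivity at most k is uniquely determined by its values on any Hamming ball of radius 2k. -/
open Finset

/-- Flip the `i`-th bit of `x ∈ {0,1}^n`. -/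
def flipBit {n : ℕ} (x : Fin n → Bool) (i : Fin n) : Fin n → Bool :=
  Function.update x i (!x i)

/-- Sensitivity of a Boolean function `f : {0,1}^n → ℤ` (with values ±1) at input `x`. -/
def sens {n : ℕ} (f : (Fin n → Bool) → ℤ) (x : Fin n → Bool) : ℕ :=
  (Finset.univ.filter (fun i : Fin n => f x ≠ f (flipBit x i))).card

/-- Maximum sensitivity `ms(f) = max_x s(f,x)`. -/
def maxSens {n : ℕ} (f : (Fin n → Bool) → ℤ) : ℕ :=
  Finset.univ.sup (fun x : Fin n → Bool => sens f x)

/-!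
At a point `x` where `f` and `g` differ and which is closest to `z` among such points, moving any
coordinate of `x` that differs from `z` to its value in `z` reaches a point of agreement, so it
changes the value of `f` or of `g`. Hence the distance from `x` to `z` is at most the sum of the
two sensitivities at `x`, and `x` already lies in the ball where `f` and `g` agree.
-/

section Product

variable {ι β : Type*} {α : ι → Type*} [Fintype ι] [DecidableEq ι]

open Classical in
/-- The sensitivity of `f` at `x` over arbitrary alphabets `α i`: a coordinate counts once if some
change of it alone changes the value of `f`, however many changes do. -/
noncomputable def sensitivityAt (f : (∀ i, α i) → β) (x : ∀ i, α i) : ℕ :=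
  #{i | ∃ a, f x ≠ f (Function.update x i a)}

variable [∀ i, DecidableEq (α i)]

lemma hammingDist_update_lt {x z : ∀ i, α i} {i : ι} (hi : x i ≠ z i) :
    hammingDist (Function.update x i (z i)) z < hammingDist x z := by
  refine card_lt_card (ssubset_iff_of_subset (fun j hj ↦ ?_) |>.2 ⟨i, by simpa using hi, by simp⟩)
  obtain rfl | hji := eq_or_ne j i
  · simpa using hi
  · simpa [hji] using hj

lemma hammingDist_le_sensitivityAt_add_sensitivityAt {f g : (∀ i, α i) → β} {x z : ∀ i, α i}
    (hx : f x ≠ g x)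
    (h : ∀ i, x i ≠ z i → f (Function.update x i (z i)) = g (Function.update x i (z i))) :
    hammingDist x z ≤ sensitivityAt f x + sensitivityAt g x := by
  refine (card_le_card fun i hi ↦ ?_).trans (card_union_le _ _)
  have hi' : x i ≠ z i := by simpa using hi
  have hchange : f x ≠ f (Function.update x i (z i)) ∨ g x ≠ g (Function.update x i (z i)) := by
    by_contra! hc
    exact hx (hc.1.trans ((h i hi').trans hc.2.symm))
  simpa using hchange.imp (Exists.intro (z i)) (Exists.intro (z i))

theorem eq_of_eq_on_hammingBall_general {f g : (∀ i, α i) → β} (z : ∀ i, α i)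
    (h : ∀ x, hammingDist x z ≤ sensitivityAt f x + sensitivityAt g x → f x = g x) : f = g := by
  funext x
  induction x using (measure (hammingDist · z)).wf.induction with
  | _ x ih =>
    by_contra hx
    exact hx <| h x <| hammingDist_le_sensitivityAt_add_sensitivityAt hx
      fun _ hi ↦ ih _ (hammingDist_update_lt hi)

end Product

section Cube

variable {n : ℕ} (f : (Fin n → Bool) → ℤ) (x : Fin n → Bool)

lemma sensitivityAt_eq_sens : sensitivityAt f x = sens f x := by
  unfold sensitivityAt sens
  congr! 2 with i
  constructor
  · rintro ⟨a, ha⟩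
    have hflip : a = !x i := by
      rw [Bool.eq_not]
      rintro rfl
      simp at ha
    rwa [flipBit, ← hflip]
  · exact fun h ↦ ⟨!x i, h⟩

lemma sensitivityAt_le_maxSens : sensitivityAt f x ≤ maxSens f :=
  (sensitivityAt_eq_sens f x).trans_le (le_sup (f := sens f) (mem_univ x))

end Cube

/-- A function of maximum sensitivity at most `k` is uniquely determined by its values
on any Hamming ball of radius `2k`. -/
theorem eq_of_eq_on_hammingBall {n k : ℕ} (f g : (Fin n → Bool) → ℤ)
    (hf : ∀ x, f x = 1 ∨ f x = -1) (hg : ∀ x, g x = 1 ∨ g x = -1)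
    (hfs : maxSens f ≤ k) (hgs : maxSens g ≤ k)
    (hball : ∃ z : Fin n → Bool, ∀ x : Fin n → Bool, hammingDist x z ≤ 2 * k → f x = g x) :
    ∀ x : Fin n → Bool, f x = g x := by
  obtain ⟨z, hz⟩ := hball
  refine congrFun <| eq_of_eq_on_hammingBall_general z fun x hx ↦ hz x ?_
  have hfx := sensitivityAt_le_maxSens f x
  have hgx := sensitivityAt_le_maxSens g x
  lia
end

section
/- Let F_k be the class of all Boolean functions f : {0,1}^n → {±1} whose maximum sensitivity is at most k, where 0 ≤ k ≤ n. Then the VC dimension of F_k is at most Σ_{i=0}^{2k} C(n,i); concretely, if a finite set T ⊆ {0,1}^n is shattered by F_k (for every subset A ⊆ T there exists f ∈ F_k with f(x) = 1 for all x ∈ A and f(x) = −1 for all x ∈ T \ A), then |T| ≤ Σ_{i=0}^{2k} C(n,i). -/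
open Finset

/-!
If `f x ≠ g x`, then every neighbour of `x` at which `f` and `g` agree is reached by flipping a
coordinate that is sensitive for `f` or for `g` at `x`. Hence functions of maximum sensitivity at
most `k` which differ at `x` agree on at most `2k` neighbours of `x`. Take such an `x` at minimal
distance from a fixed centre `c`: all its neighbours closer to `c` are points of agreement, and
there are as many of them as the distance, so `x` lies in the ball `B` of radius `2k` around `c`.
Thus functions in `F_k` are determined by their restrictions to `B`, and a shattered set `T`
satisfies `2 ^ |T| ≤ |F_k| ≤ 2 ^ |B|`.
-/

section VCDimension

variable {α : Type*} [DecidableEq α] {𝒜 : Finset (Finset α)} {s b : Finset α}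

theorem two_pow_card_le_card_of_shatters (h : 𝒜.Shatters s) : 2 ^ #s ≤ #𝒜 := by
  rw [← card_powerset, ← shatters_iff.mp h]
  exact card_image_le

theorem card_le_two_pow_of_injOn_inter (h : Set.InjOn (b ∩ ·) (𝒜 : Set (Finset α))) :
    #𝒜 ≤ 2 ^ #b := by
  rw [← card_powerset]
  exact card_le_card_of_injOn (b ∩ ·) (fun _ _ ↦ mem_powerset.mpr inter_subset_left) h

theorem vcDim_le_card_of_injOn_inter (h : Set.InjOn (b ∩ ·) (𝒜 : Set (Finset α))) :
    𝒜.vcDim ≤ #b :=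
  Finset.sup_le fun _ hs ↦ (Nat.pow_le_pow_iff_right one_lt_two).mp <|
    (two_pow_card_le_card_of_shatters (mem_shatterer.mp hs)).trans
      (card_le_two_pow_of_injOn_inter h)

theorem inter_filter_eq_of_forall [Fintype α] {p : α → Prop} [DecidablePred p] (hbs : b ⊆ s)
    (hpos : ∀ x ∈ b, p x) (hneg : ∀ x ∈ s \ b, ¬ p x) : s ∩ ({x | p x} : Finset α) = b := by
  ext x
  simp only [mem_inter, mem_filter_univ]
  refine ⟨fun ⟨hxs, hpx⟩ ↦ ?_, fun hxb ↦ ⟨hbs hxb, hpos x hxb⟩⟩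
  by_contra hxb
  exact hneg x (mem_sdiff.mpr ⟨hxs, hxb⟩) hpx

end VCDimension

section HammingBall

variable {ι : Type*} [Fintype ι] [DecidableEq ι]

/-- The closed Hamming ball of radius `r` around `c` in the cube `{0,1}^ι`. Two functions of low
sensitivity are compared through their values on such a ball. -/
def hammingBall (c : ι → Bool) (r : ℕ) : Finset (ι → Bool) :=
  {x | hammingDist x c ≤ r}

theorem mem_hammingBall {c x : ι → Bool} {r : ℕ} : x ∈ hammingBall c r ↔ hammingDist x c ≤ r := by
  simp [hammingBall]

theorem card_filter_hammingDist_eq (c : ι → Bool) (d : ℕ) :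
    #{x | hammingDist x c = d} = (Fintype.card ι).choose d := by
  have hflipped (s : Finset ι) : ({i | (decide (i ∈ s) ^^ c i) ≠ c i} : Finset ι) = s := by
    ext i
    cases hc : c i <;> simp [hc]
  rw [← card_univ, ← card_powersetCard]
  refine card_nbij' (fun x ↦ ({i | x i ≠ c i} : Finset ι)) (fun s i ↦ decide (i ∈ s) ^^ c i)
    (fun x hx ↦ by simpa [hammingDist] using hx) (fun s hs ↦ ?_) (fun x _ ↦ ?_)
    (fun s _ ↦ hflipped s)
  · refine mem_coe.mpr ((mem_filter_univ _).mpr ?_)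
    rw [hammingDist, hflipped, (mem_powersetCard.mp hs).2]
  · funext i
    cases hx : x i <;> cases hc : c i <;> simp [hx, hc]

theorem card_hammingBall (c : ι → Bool) (r : ℕ) :
    #(hammingBall c r) = ∑ d ∈ range (r + 1), (Fintype.card ι).choose d := by
  rw [card_eq_sum_card_fiberwise (f := (hammingDist · c)) (t := range (r + 1))]
  · refine sum_congr rfl fun d hd ↦ ?_
    rw [← card_filter_hammingDist_eq c d, hammingBall, filter_filter]
    congr 1
    ext x
    simp only [mem_filter, mem_univ, true_and, mem_range] at hd ⊢
    omega
  · intro x hx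
    simpa [Nat.lt_succ_iff] using mem_hammingBall.mp hx

end HammingBall

section Sensitivity

variable {n r : ℕ} {f g : (Fin n → Bool) → ℤ} {x c : Fin n → Bool}

theorem hammingDist_flipBit_lt {i : Fin n} (h : x i ≠ c i) :
    hammingDist (flipBit x i) c < hammingDist x c := by
  have hi : flipBit x i i = c i := by simpa [flipBit] using (Bool.eq_not_of_ne h.symm).symm
  have hsub (j : Fin n) (hj : flipBit x i j ≠ c j) : x j ≠ c j := by
    obtain rfl | hji := eq_or_ne j i
    · exact h
    · rwa [flipBit, Function.update_of_ne hji] at hj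
  exact card_lt_card <| (ssubset_iff_of_subset (monotone_filter_right _ fun j _ ↦ hsub j)).mpr
    ⟨i, by simpa, by simpa⟩

theorem sens_le_maxSens (f : (Fin n → Bool) → ℤ) (x : Fin n → Bool) : sens f x ≤ maxSens f :=
  le_sup (f := sens f) (mem_univ x)

theorem card_filter_flipBit_eq_le_sens_add_sens (h : f x ≠ g x) :
    #{i | f (flipBit x i) = g (flipBit x i)} ≤ sens f x + sens g x := by
  refine (card_le_card fun i hi ↦ ?_).trans (card_union_le _ _)
  simp only [mem_union, mem_filter_univ] at hi ⊢
  by_contra! hinsens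
  exact h (hinsens.1.trans (hi.trans hinsens.2.symm))

theorem eq_of_eqOn_hammingBall (hr : maxSens f + maxSens g ≤ r)
    (h : Set.EqOn f g (hammingBall c r)) : f = g := by
  funext x
  induction hd : hammingDist x c using Nat.strong_induction_on generalizing x with
  | _ d ih =>
    by_contra hne
    have hcloser : ∀ i, x i ≠ c i → f (flipBit x i) = g (flipBit x i) := fun i hi ↦
      ih _ (hd ▸ hammingDist_flipBit_lt hi) _ rfl
    have hball : hammingDist x c ≤ r := calc
      hammingDist x c ≤ #{i | f (flipBit x i) = g (flipBit x i)} :=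
        card_le_card (monotone_filter_right _ fun i _ ↦ hcloser i)
      _ ≤ sens f x + sens g x := card_filter_flipBit_eq_le_sens_add_sens hne
      _ ≤ maxSens f + maxSens g := add_le_add (sens_le_maxSens f x) (sens_le_maxSens g x)
      _ ≤ r := hr
    exact hne (h (mem_hammingBall.mpr hball))

end Sensitivity

section LowSensitivity

variable {α : Type*} [DecidableEq α]

/-- The `±1`-valued indicator of a set, equal to `1` on `U` and to `-1` off `U`. It identifies
families of sets with classes of Boolean functions. -/
def signIndicator (U : Finset α) (x : α) : ℤ :=
  if x ∈ U then 1 else -1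

theorem signIndicator_eq_one_iff {U : Finset α} {x : α} : signIndicator U x = 1 ↔ x ∈ U := by
  simp [signIndicator]

theorem signIndicator_injective : Function.Injective (signIndicator (α := α)) := fun U V h ↦ by
  ext x
  rw [← signIndicator_eq_one_iff, h, signIndicator_eq_one_iff]

theorem signIndicator_filter_eq_one [Fintype α] {f : α → ℤ} (hf : ∀ x, f x = 1 ∨ f x = -1) :
    signIndicator {x | f x = 1} = f := by
  funext x
  obtain hx | hx := hf x <;> simp [signIndicator, hx]

/-- The class `F_k` of Boolean functions on `{0,1}^n` of maximum sensitivity at most `k`, each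
function `f` being encoded by the set `f ⁻¹' {1}` so that `Finset.vcDim` applies. -/
def lowSensClass (n k : ℕ) : Finset (Finset (Fin n → Bool)) :=
  {U | maxSens (signIndicator U) ≤ k}

theorem mem_lowSensClass {n k : ℕ} {U : Finset (Fin n → Bool)} :
    U ∈ lowSensClass n k ↔ maxSens (signIndicator U) ≤ k := by
  simp [lowSensClass]

theorem injOn_hammingBall_inter_lowSensClass {n : ℕ} (c : Fin n → Bool) (k : ℕ) :
    Set.InjOn (hammingBall c (2 * k) ∩ ·) (lowSensClass n k : Set (Finset (Fin n → Bool))) := by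
  intro U hU V hV hUV
  have hsens : maxSens (signIndicator U) + maxSens (signIndicator V) ≤ 2 * k :=
    (add_le_add (mem_lowSensClass.mp hU) (mem_lowSensClass.mp hV)).trans_eq (two_mul k).symm
  refine signIndicator_injective (eq_of_eqOn_hammingBall (c := c) hsens fun x hx ↦ ?_)
  have hiff : x ∈ U ↔ x ∈ V := by
    simpa [mem_coe.mp hx] using Finset.ext_iff.mp hUV x
  simp only [signIndicator, hiff]

theorem vcDim_lowSensClass_le (n k : ℕ) :
    (lowSensClass n k).vcDim ≤ ∑ i ∈ range (2 * k + 1), n.choose i := by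
  let c : Fin n → Bool := fun _ ↦ false
  calc (lowSensClass n k).vcDim
      ≤ #(hammingBall c (2 * k)) :=
        vcDim_le_card_of_injOn_inter (injOn_hammingBall_inter_lowSensClass c k)
    _ = ∑ i ∈ range (2 * k + 1), n.choose i := by rw [card_hammingBall, Fintype.card_fin]

end LowSensitivity

/-- Any set `T ⊆ {0,1}^n` shattered by the class of ±1-valued functions of maximum
sensitivity at most `k` has cardinality at most `Σ_{i=0}^{2k} C(n,i)`; i.e. the VC
dimension of `F_k` is at most `Σ_{i=0}^{2k} C(n,i)`. -/
theorem vcDim_lowSens_le {n k : ℕ} (hk : k ≤ n) (T : Finset (Fin n → Bool))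
    (hshatter : ∀ A ⊆ T, ∃ f : (Fin n → Bool) → ℤ,
      (∀ x, f x = 1 ∨ f x = -1) ∧ maxSens f ≤ k ∧
      (∀ x ∈ A, f x = 1) ∧ (∀ x ∈ T \ A, f x = -1)) :
    T.card ≤ ∑ i ∈ Finset.range (2 * k + 1), n.choose i := by
  have hT : (lowSensClass n k).Shatters T := by
    intro A hA
    obtain ⟨f, hf, hsens, hone, hneg⟩ := hshatter A hA
    have hmem : ({x | f x = 1} : Finset _) ∈ lowSensClass n k := by
      rwa [mem_lowSensClass, signIndicator_filter_eq_one hf]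
    have htrace : T ∩ ({x | f x = 1} : Finset _) = A :=
      inter_filter_eq_of_forall hA hone fun x hx ↦ by simp [hneg x hx]
    exact ⟨_, hmem, htrace⟩
  exact hT.card_le_vcDim.trans (vcDim_lowSensClass_le n k)
end
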